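/- Let α ≥ 1, p ∈ ℝ with p + α > 0, and let f : (0,∞) × 𝕊² → ℂ be smooth with ∫ R |f|² dσ dR < ∞ and ∫ R^{1-2p} |∂_R^α f|² dσ dR < ∞. Then lim inf_{R→0} ∫_{𝕊²} |R^α f(R,ω)|² dσ = 0, and consequently ∫_{𝕊²}|R^{-p} f(R,ω)|² dσ ≤ 2(p+α)^{-1} ∫_0^R ∫_{𝕊²} R'^{1-2p} |∂_R^α f|² dσ dR' for all R > 0; in particular ∫_{𝕊²}|R^{-p}f|² dσ → 0 as R → 0. -/

import Mathlib

open MeasureTheory Filter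

noncomputable section

abbrev E3 := EuclideanSpace ℝ (Fin 3)

/-- The α-twisted derivative: `∂_R^α f (R) = R^{-α} d/dR (R^α f)`. -/
def twistDeriv (α : ℝ) (f : ℝ → ℂ) (R : ℝ) : ℂ :=
  ((R ^ (-α) : ℝ) : ℂ) * deriv (fun r : ℝ => ((r ^ α : ℝ) : ℂ) * f r) R

/-!
Put `u = R^α f` and `β = p + α`, so that `R^{1-2p} |∂_R^α f|² = R^{1-2β} |∂_R u|²`. Integrability
of `R ‖f‖² = R^{1-2α} ‖u‖²` near `0` with `1 - 2α ≤ -1` forces the spherical norm `‖u(R)‖` to be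
small for arbitrarily small `R`. The fundamental theorem of calculus and the Cauchy–Schwarz
inequality with weight `s^{2β-1}`, whose integral over `(0, R)` is `R^{2β} / (2β)`, give
`‖u(R) - u(r)‖² ≤ R^{2β} / (2β) * ∫_0^R s^{1-2β} ‖∂_s u‖²` for `r < R`; letting `r → 0` along radii
where `‖u(r)‖` is small bounds `‖u(R)‖² = R^{2β} ‖R^{-p} f‖²`.

The Hausdorff measure of `𝕊²` is finite because two inverse stereographic projections, restricted
to discs of radius `2`, are Lipschitz and cover the sphere.
-/

section UnitSphere

open Metric Module

variable {E : Type*} [NormedAddCommGroup E] [InnerProductSpace ℝ E]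

lemma hausdorffMeasure_image_lt_top_of_locallyLipschitz {F Y : Type*} [NormedAddCommGroup F]
    [NormedSpace ℝ F] [FiniteDimensional ℝ F] [MeasurableSpace F] [BorelSpace F]
    [MetricSpace Y] [MeasurableSpace Y] [BorelSpace Y] {g : F → Y} (hg : LocallyLipschitz g)
    {K : Set F} (hK : IsCompact K) : μH[finrank ℝ F] (g '' K) < ⊤ := by
  obtain ⟨C, hC⟩ := hg.locallyLipschitzOn.exists_lipschitzOnWith_of_compact hK
  calc μH[finrank ℝ F] (g '' K)
      ≤ (C : ENNReal) ^ (finrank ℝ F : ℝ) * μH[finrank ℝ F] K :=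
        hC.hausdorffMeasure_image_le (Nat.cast_nonneg _)
    _ < ⊤ := ENNReal.mul_lt_top
        (ENNReal.rpow_lt_top_of_nonneg (Nat.cast_nonneg _) ENNReal.coe_ne_top) hK.measure_lt_top

lemma mem_image_stereoInvFunAux_of_inner_nonpos {v x : E} (hv : ‖v‖ = 1) (hx : ‖x‖ = 1)
    (hvx : inner ℝ v x ≤ 0) :
    x ∈ (fun w : (ℝ ∙ v)ᗮ => stereoInvFunAux v (w : E)) '' closedBall 0 2 := by
  refine ⟨stereoToFun v x, ?_, ?_⟩
  · have hproj : ‖(ℝ ∙ v)ᗮ.orthogonalProjectionOnto x‖ ≤ 1 :=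
      ((ℝ ∙ v)ᗮ.norm_orthogonalProjectionOnto_apply_le x).trans hx.le
    have hscale : ‖2 / (1 - inner ℝ v x)‖ ≤ 2 := by
      rw [Real.norm_of_nonneg (by bound)]
      exact div_le_self zero_le_two (by linarith)
    rw [mem_closedBall_zero_iff, stereoToFun_apply, innerSL_apply_apply, norm_smul]
    exact (mul_le_mul hscale hproj (norm_nonneg _) zero_le_two).trans_eq (mul_one 2)
  · have hne : x ≠ v := by
      rintro rfl
      rw [real_inner_self_eq_norm_sq, hx] at hvx
      norm_num at hvx
    exact congrArg Subtype.val
      (stereo_left_inv hv (x := ⟨x, mem_sphere_zero_iff_norm.2 hx⟩) hne)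

lemma hausdorffMeasure_unitSphere_lt_top [MeasurableSpace E] [BorelSpace E] {n : ℕ}
    (hn : finrank ℝ E = n + 1) : μH[n] (sphere (0 : E) 1) < ⊤ := by
  have : Fact (finrank ℝ E = n + 1) := ⟨hn⟩
  have : FiniteDimensional ℝ E := .of_fact_finrank_eq_succ n
  have : Nontrivial E := nontrivial_of_finrank_eq_succ hn
  obtain ⟨v, hv⟩ := exists_norm_eq E zero_le_one
  have hcap : ∀ w : E, ‖w‖ = 1 →
      μH[n] ((fun y : (ℝ ∙ w)ᗮ => stereoInvFunAux w (y : E)) '' closedBall 0 2) < ⊤ := by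
    intro w hw
    have hdim : finrank ℝ (ℝ ∙ w)ᗮ = n :=
      Submodule.finrank_orthogonal_span_singleton (norm_ne_zero_iff.1 (hw ▸ one_ne_zero))
    rw [← hdim]
    exact hausdorffMeasure_image_lt_top_of_locallyLipschitz
      (contDiff_stereoInvFunAux.comp (ℝ ∙ w)ᗮ.subtypeL.contDiff).locallyLipschitz
      (isCompact_closedBall 0 2)
  refine (measure_mono fun x hx => ?_).trans_lt
    (measure_union_lt_top (hcap v hv) (hcap (-v) (by rwa [norm_neg])))
  rw [mem_sphere_zero_iff_norm] at hx
  rcases le_total (inner ℝ v x) 0 with h | h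
  · exact .inl (mem_image_stereoInvFunAux_of_inner_nonpos hv hx h)
  · exact .inr (mem_image_stereoInvFunAux_of_inner_nonpos (by rwa [norm_neg]) hx
      (by rwa [inner_neg_left, neg_nonpos]))

end UnitSphere

section WeightedEstimates

open Set Topology

lemma sq_integral_mul_le_integral_sq_mul_integral_sq {Ω : Type*} [MeasurableSpace Ω]
    {μ : Measure Ω} {g h : Ω → ℝ} (hg : MemLp g 2 μ) (hh : MemLp h 2 μ) :
    (∫ x, g x * h x ∂μ) ^ 2 ≤ (∫ x, g x ^ 2 ∂μ) * ∫ x, h x ^ 2 ∂μ := by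
  have inner_toLp : ∀ {a b : Ω → ℝ} (ha : MemLp a 2 μ) (hb : MemLp b 2 μ),
      inner ℝ (ha.toLp a) (hb.toLp b) = ∫ x, a x * b x ∂μ := by
    intro a b ha hb
    rw [L2.inner_def]
    refine integral_congr_ae ?_
    filter_upwards [ha.coeFn_toLp, hb.coeFn_toLp] with x hax hbx
    rw [hax, hbx, real_inner_comm, RCLike.inner_apply, conj_trivial]
  simpa only [inner_toLp, ← sq] using real_inner_mul_inner_self_le (hg.toLp g) (hh.toLp h)

lemma sq_norm_le_add_of_sq_norm_sub {F : Type*} [SeminormedAddCommGroup F] {η : ℝ} (hη : 0 < η)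
    (a b : F) : ‖a‖ ^ 2 ≤ (1 + η) * ‖a - b‖ ^ 2 + (1 + η⁻¹) * ‖b‖ ^ 2 := by
  have htri : ‖a‖ ≤ ‖a - b‖ + ‖b‖ := norm_le_norm_sub_add a b
  have hyoung : 2 * ‖a - b‖ * ‖b‖ ≤ η * ‖a - b‖ ^ 2 + η⁻¹ * ‖b‖ ^ 2 := by
    have hsq : 0 ≤ η⁻¹ * (η * ‖a - b‖ - ‖b‖) ^ 2 := by positivity
    have hexpand : η⁻¹ * (η * ‖a - b‖ - ‖b‖) ^ 2 =
        η * ‖a - b‖ ^ 2 + η⁻¹ * ‖b‖ ^ 2 - 2 * ‖a - b‖ * ‖b‖ := by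
      field_simp
      ring
    linarith
  calc ‖a‖ ^ 2 ≤ (‖a - b‖ + ‖b‖) ^ 2 := by gcongr
    _ ≤ (1 + η) * ‖a - b‖ ^ 2 + (1 + η⁻¹) * ‖b‖ ^ 2 := by linarith

lemma integral_rpow_sub_one_le {γ r R : ℝ} (hγ : 0 < γ) (hr : 0 ≤ r) :
    ∫ s in r..R, s ^ (γ - 1) ≤ R ^ γ / γ := by
  rw [integral_rpow (.inl (by linarith)), sub_add_cancel]
  gcongr
  exact sub_le_self _ (Real.rpow_nonneg hr _)

lemma sq_intervalIntegral_le_rpow_mul {β r R : ℝ} (hβ : 0 < β) (hr : 0 < r) (hrR : r ≤ R)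
    {g : ℝ → ℝ} (hg : ContinuousOn g (Icc r R)) :
    (∫ s in r..R, g s) ^ 2 ≤
      R ^ (2 * β) / (2 * β) * ∫ s in r..R, s ^ (1 - 2 * β) * g s ^ 2 := by
  have hpos : ∀ s ∈ uIcc r R, 0 < s := fun s hs => hr.trans_le (uIcc_of_le hrR ▸ hs).1
  have hpow : ∀ c : ℝ, ContinuousOn (fun s : ℝ => s ^ c) (Icc r R) := fun c =>
    continuousOn_id.rpow_const fun s hs => .inl (hr.trans_le hs.1).ne'
  have memLp_two : ∀ {h : ℝ → ℝ}, ContinuousOn h (Icc r R) →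
      MemLp h 2 (volume.restrict (Ioc r R)) := fun hh =>
    (memLp_two_iff_integrable_sq (hh.aestronglyMeasurable_of_subset_isCompact isCompact_Icc
      measurableSet_Ioc Ioc_subset_Icc_self)).2 ((hh.pow 2).integrableOn_Icc.mono_set
        Ioc_subset_Icc_self)
  have hsplit : ∫ s in r..R, g s = ∫ s in r..R, s ^ (β - 1 / 2) * (s ^ (1 / 2 - β) * g s) := by
    refine intervalIntegral.integral_congr fun s hs => ?_
    rw [← mul_assoc, ← Real.rpow_add (hpos s hs), sub_add_sub_cancel', sub_self, Real.rpow_zero,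
      one_mul]
  have hweight : ∫ s in r..R, (s ^ (β - 1 / 2)) ^ 2 ≤ R ^ (2 * β) / (2 * β) := by
    have hsq : ∫ s in r..R, (s ^ (β - 1 / 2)) ^ 2 = ∫ s in r..R, s ^ (2 * β - 1) := by
      refine intervalIntegral.integral_congr fun s hs => ?_
      rw [← Real.rpow_mul_natCast (hpos s hs).le]
      ring_nf
    exact hsq.trans_le (integral_rpow_sub_one_le (by positivity) hr.le)
  have henergy : ∫ s in r..R, (s ^ (1 / 2 - β) * g s) ^ 2 =
      ∫ s in r..R, s ^ (1 - 2 * β) * g s ^ 2 := by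
    refine intervalIntegral.integral_congr fun s hs => ?_
    rw [mul_pow, ← Real.rpow_mul_natCast (hpos s hs).le]
    ring_nf
  calc (∫ s in r..R, g s) ^ 2
      ≤ (∫ s in r..R, (s ^ (β - 1 / 2)) ^ 2) * ∫ s in r..R, (s ^ (1 / 2 - β) * g s) ^ 2 := by
        rw [hsplit]
        simp only [intervalIntegral.integral_of_le hrR]
        exact sq_integral_mul_le_integral_sq_mul_integral_sq (memLp_two (hpow _))
          (memLp_two ((hpow _).mul hg))
    _ ≤ R ^ (2 * β) / (2 * β) * ∫ s in r..R, s ^ (1 - 2 * β) * g s ^ 2 := by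
        rw [henergy]
        refine mul_le_mul_of_nonneg_right hweight
          (intervalIntegral.integral_nonneg hrR fun s hs => ?_)
        have hs0 : 0 < s := hr.trans_le hs.1
        positivity

lemma sq_norm_sub_le_rpow_mul_integral_sq_norm_deriv {F : Type*} [NormedAddCommGroup F]
    [NormedSpace ℝ F] [CompleteSpace F] {β r R : ℝ} (hβ : 0 < β) (hr : 0 < r) (hrR : r ≤ R)
    {u u' : ℝ → F} (hu : ∀ s ∈ Icc r R, HasDerivAt u (u' s) s) (hu' : ContinuousOn u' (Icc r R)) :
    ‖u R - u r‖ ^ 2 ≤ R ^ (2 * β) / (2 * β) * ∫ s in r..R, s ^ (1 - 2 * β) * ‖u' s‖ ^ 2 := by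
  rw [← intervalIntegral.integral_eq_sub_of_hasDerivAt (uIcc_of_le hrR ▸ hu)
    (hu'.intervalIntegrable_of_Icc hrR)]
  calc ‖∫ s in r..R, u' s‖ ^ 2 ≤ (∫ s in r..R, ‖u' s‖) ^ 2 := by
        gcongr
        exact intervalIntegral.norm_integral_le_integral_norm hrR
    _ ≤ R ^ (2 * β) / (2 * β) * ∫ s in r..R, s ^ (1 - 2 * β) * ‖u' s‖ ^ 2 :=
        sq_intervalIntegral_le_rpow_mul hβ hr hrR hu'.norm

end WeightedEstimates

section NearLeftEndpoint

open Set Topology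

variable {G : Type*} [NormedAddCommGroup G]

lemma exists_integrableOn_Ioo_of_integrableAtFilter_nhdsGT {a : ℝ} {g : ℝ → G}
    (hg : IntegrableAtFilter g (𝓝[>] a)) : ∃ b > a, IntegrableOn g (Ioo a b) := by
  obtain ⟨s, hs, hint⟩ := hg
  obtain ⟨b, hab, hbs⟩ := mem_nhdsGT_iff_exists_Ioo_subset.1 hs
  exact ⟨b, hab, hint.mono_set hbs⟩

lemma integrableAtFilter_nhdsGT_congr_of_eqOn {a : ℝ} {g h : ℝ → G} (hgh : EqOn g h (Ioi a)) :
    IntegrableAtFilter g (𝓝[>] a) ↔ IntegrableAtFilter h (𝓝[>] a) := by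
  have transfer : ∀ {g h : ℝ → G}, EqOn g h (Ioi a) → IntegrableAtFilter g (𝓝[>] a) →
      IntegrableAtFilter h (𝓝[>] a) := by
    intro g h hgh hg
    obtain ⟨b, hab, hint⟩ := exists_integrableOn_Ioo_of_integrableAtFilter_nhdsGT hg
    exact ⟨Ioo a b, Ioo_mem_nhdsGT hab,
      hint.congr_fun (hgh.mono Ioo_subset_Ioi_self) measurableSet_Ioo⟩
  exact ⟨transfer hgh, transfer hgh.symm⟩

lemma tendsto_setIntegral_Ioo_nhdsGT_zero [NormedSpace ℝ G] {a : ℝ} {g : ℝ → G}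
    (hg : IntegrableAtFilter g (𝓝[>] a)) :
    Tendsto (fun R => ∫ s in Ioo a R, g s) (𝓝[>] a) (𝓝 0) := by
  obtain ⟨b, hab, hint⟩ := exists_integrableOn_Ioo_of_integrableAtFilter_nhdsGT hg
  have hlen : Tendsto (fun R => ENNReal.ofReal (R - a)) (𝓝[>] a) (𝓝 0) := by
    refine ((ENNReal.continuous_ofReal.comp (continuous_id.sub continuous_const)).tendsto' a 0
      ?_).mono_left nhdsWithin_le_nhds
    simp
  have hvol : Tendsto (volume.restrict (Ioo a b) ∘ Ioo a) (𝓝[>] a) (𝓝 0) :=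
    tendsto_of_tendsto_of_tendsto_of_le_of_le tendsto_const_nhds hlen (fun _ => zero_le)
      fun R => (Measure.restrict_apply_le _ _).trans_eq Real.volume_Ioo
  refine (hint.tendsto_setIntegral_nhds_zero hvol).congr' ?_
  filter_upwards [Ioo_mem_nhdsGT hab] with R hR
  rw [Measure.restrict_restrict measurableSet_Ioo,
    inter_eq_left.2 (Ioo_subset_Ioo_right hR.2.le)]

lemma frequently_lt_of_integrableAtFilter_rpow_mul {c : ℝ} (hc : c ≤ -1) {h : ℝ → ℝ}
    (hint : IntegrableAtFilter (fun r => r ^ c * h r) (𝓝[>] 0)) {ε : ℝ} (hε : 0 < ε) :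
    ∃ᶠ r in 𝓝[>] 0, h r < ε := by
  intro hge
  simp only [not_lt] at hge
  obtain ⟨b, hb, hbint⟩ := exists_integrableOn_Ioo_of_integrableAtFilter_nhdsGT hint
  obtain ⟨d, hd, hdge⟩ := mem_nhdsGT_iff_exists_Ioo_subset.1 (inter_mem hge (Ioo_mem_nhdsGT hb))
  have hrpow : IntegrableOn (fun r : ℝ => r ^ c) (Ioo 0 d) := by
    refine ((hbint.mono_set fun r hr => (hdge hr).2).const_mul ε⁻¹).mono'
      (by fun_prop) (ae_restrict_of_forall_mem measurableSet_Ioo fun r hr => ?_)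
    have hrc : 0 ≤ r ^ c := Real.rpow_nonneg hr.1.le c
    rw [Real.norm_of_nonneg hrc, le_inv_mul_iff₀' hε]
    exact mul_le_mul_of_nonneg_left (hdge hr).1 hrc
  exact hc.not_gt ((intervalIntegral.integrableOn_Ioo_rpow_iff hd).1 hrpow)

end NearLeftEndpoint

lemma integrable_of_continuousOn_of_ae_mem {X F : Type*} [TopologicalSpace X]
    [T2Space X] [MeasurableSpace X] [OpensMeasurableSpace X] [NormedAddCommGroup F]
    {μ : Measure X} [IsFiniteMeasure μ] {K : Set X} (hK : IsCompact K)
    (hμK : ∀ᵐ x ∂μ, x ∈ K) {g : X → F} (hg : ContinuousOn g K) : Integrable g μ := by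
  rw [← Measure.restrict_eq_self_of_ae_mem hμK]
  exact hg.integrableOn_compact hK

section CurveFamily

open Set Topology

variable {X : Type*} [TopologicalSpace X] {F : Type*} [NormedAddCommGroup F] [NormedSpace ℝ F]

/-- A family of `C¹` curves `s ↦ u s x`, `s > 0`, with velocities `u' s x`, indexed by `x ∈ K`,
whose positions and velocities are jointly continuous: the setting for estimating
`∫ ‖u s x‖²` over `x` by integrating in `s`. It asks for derivatives in `s` only, so that the index
space need not be a manifold. -/
structure IsC1CurveFamily (u u' : ℝ → X → F) (K : Set X) : Prop where
  continuousOn : ContinuousOn (fun q : ℝ × X => u q.1 q.2) (Ioi 0 ×ˢ K)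
  continuousOn_deriv : ContinuousOn (fun q : ℝ × X => u' q.1 q.2) (Ioi 0 ×ˢ K)
  hasDerivAt : ∀ s > 0, ∀ x ∈ K, HasDerivAt (fun r => u r x) (u' s x) s

lemma isC1CurveFamily_of_contDiffOn {E : Type*} [NormedAddCommGroup E] [NormedSpace ℝ E]
    {f : ℝ → E → F} (hf : ContDiffOn ℝ 1 (fun q : ℝ × E => f q.1 q.2) {q : ℝ × E | 0 < q.1})
    (K : Set E) :
    IsC1CurveFamily f (fun s x => fderiv ℝ (fun q : ℝ × E => f q.1 q.2) (s, x) (1, 0)) K := by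
  have hopen : IsOpen {q : ℝ × E | 0 < q.1} := isOpen_lt continuous_const continuous_fst
  refine ⟨hf.continuousOn.mono fun q hq => hq.1, ?_, fun s hs x _ => ?_⟩
  · exact ((hf.continuousOn_fderiv_of_isOpen hopen le_rfl).clm_apply continuousOn_const).mono
      fun q hq => hq.1
  · have hdiff := (hf.differentiableOn one_ne_zero).differentiableAt
      (hopen.mem_nhds (x := (s, x)) hs)
    exact hdiff.hasFDerivAt.comp_hasDerivAt s ((hasDerivAt_id s).prodMk (hasDerivAt_const s x))

namespace IsC1CurveFamily

variable {u u' : ℝ → X → F} {K : Set X}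

lemma rpow_smul (hu : IsC1CurveFamily u u' K) (α : ℝ) :
    IsC1CurveFamily (fun s x => s ^ α • u s x)
      (fun s x => s ^ α • u' s x + (α * s ^ (α - 1)) • u s x) K := by
  have hpow : ∀ c : ℝ, ContinuousOn (fun q : ℝ × X => q.1 ^ c) (Ioi 0 ×ˢ K) := fun c =>
    continuousOn_fst.rpow_const fun q hq => .inl (ne_of_gt hq.1)
  refine ⟨(hpow α).smul hu.continuousOn, ?_, fun s hs x hx => ?_⟩
  · exact ((hpow α).smul hu.continuousOn_deriv).add
      ((continuousOn_const.mul (hpow (α - 1))).smul hu.continuousOn)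
  · exact (Real.hasDerivAt_rpow_const (.inl (ne_of_gt hs))).smul (hu.hasDerivAt s hs x hx)

lemma continuousOn_slice (hu : IsC1CurveFamily u u' K) {s : ℝ} (hs : 0 < s) :
    ContinuousOn (u s) K :=
  hu.continuousOn.comp (f := fun x => (s, x)) (by fun_prop) fun _ hx => ⟨hs, hx⟩

variable [MeasurableSpace X] [OpensMeasurableSpace X] [T2Space X] {μ : Measure X}
  [IsFiniteMeasure μ]

lemma integrable_sq_norm_slice (hK : IsCompact K) (hμK : ∀ᵐ x ∂μ, x ∈ K)
    (hu : IsC1CurveFamily u u' K) {s : ℝ} (hs : 0 < s) : Integrable (fun x => ‖u s x‖ ^ 2) μ :=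
  integrable_of_continuousOn_of_ae_mem hK hμK ((hu.continuousOn_slice hs).norm.pow 2)

lemma integrable_sq_norm_sub (hK : IsCompact K) (hμK : ∀ᵐ x ∂μ, x ∈ K)
    (hu : IsC1CurveFamily u u' K) {r R : ℝ} (hr : 0 < r) (hR : 0 < R) :
    Integrable (fun x => ‖u R x - u r x‖ ^ 2) μ :=
  integrable_of_continuousOn_of_ae_mem hK hμK
    (((hu.continuousOn_slice hR).sub (hu.continuousOn_slice hr)).norm.pow 2)

lemma integrable_rpow_mul_sq_norm_deriv_prod (hK : IsCompact K) (hμK : ∀ᵐ x ∂μ, x ∈ K)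
    (hu : IsC1CurveFamily u u' K) (c : ℝ) {r : ℝ} (hr : 0 < r) (R : ℝ) :
    Integrable (fun q : ℝ × X => q.1 ^ c * ‖u' q.1 q.2‖ ^ 2)
      ((volume.restrict (Ioc r R)).prod μ) := by
  have hsub : Icc r R ×ˢ K ⊆ Ioi 0 ×ˢ K := fun q hq => ⟨hr.trans_le hq.1.1, hq.2⟩
  refine integrable_of_continuousOn_of_ae_mem (isCompact_Icc.prod hK) ?_
    ((continuousOn_fst.rpow_const fun q hq => .inl (hr.trans_le hq.1.1).ne').mul
      ((hu.continuousOn_deriv.mono hsub).norm.pow 2))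
  filter_upwards [Measure.quasiMeasurePreserving_fst.ae (ae_restrict_mem measurableSet_Ioc),
    Measure.quasiMeasurePreserving_snd.ae hμK] with q hq₁ hq₂
  exact ⟨Ioc_subset_Icc_self hq₁, hq₂⟩

lemma integrableOn_energy_Ioo (hK : IsCompact K) (hμK : ∀ᵐ x ∂μ, x ∈ K)
    (hu : IsC1CurveFamily u u' K) {c : ℝ}
    (henergy : IntegrableAtFilter (fun s => s ^ c * ∫ x, ‖u' s x‖ ^ 2 ∂μ) (𝓝[>] 0)) (R : ℝ) :
    IntegrableOn (fun s => s ^ c * ∫ x, ‖u' s x‖ ^ 2 ∂μ) (Ioo 0 R) := by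
  obtain ⟨b, hb, hint⟩ := exists_integrableOn_Ioo_of_integrableAtFilter_nhdsGT henergy
  have haway : IntegrableOn (fun s => s ^ c * ∫ x, ‖u' s x‖ ^ 2 ∂μ) (Ioc (b / 2) R) := by
    simpa only [IntegrableOn, integral_const_mul] using
      (hu.integrable_rpow_mul_sq_norm_deriv_prod hK hμK c (half_pos hb) R).integral_prod_left
  refine (hint.union haway).mono_set fun s hs => ?_
  rcases lt_or_ge s b with hsb | hsb
  · exact .inl ⟨hs.1, hsb⟩
  · exact .inr ⟨(half_lt_self hb).trans_le hsb, hs.2.le⟩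

lemma integral_sq_norm_sub_le [CompleteSpace F] (hK : IsCompact K) (hμK : ∀ᵐ x ∂μ, x ∈ K)
    (hu : IsC1CurveFamily u u' K) {β r R : ℝ} (hβ : 0 < β) (hr : 0 < r) (hrR : r ≤ R) :
    ∫ x, ‖u R x - u r x‖ ^ 2 ∂μ ≤
      R ^ (2 * β) / (2 * β) * ∫ s in Ioc r R, s ^ (1 - 2 * β) * ∫ x, ‖u' s x‖ ^ 2 ∂μ := by
  have hprod := hu.integrable_rpow_mul_sq_norm_deriv_prod hK hμK (1 - 2 * β) hr R
  have hfubini : ∫ s in Ioc r R, s ^ (1 - 2 * β) * ∫ x, ‖u' s x‖ ^ 2 ∂μ =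
      ∫ x, (∫ s in Ioc r R, s ^ (1 - 2 * β) * ‖u' s x‖ ^ 2) ∂μ := by
    simpa only [integral_const_mul] using
      integral_integral_swap (f := fun s x => s ^ (1 - 2 * β) * ‖u' s x‖ ^ 2) hprod
  rw [hfubini, ← integral_const_mul]
  refine integral_mono_ae (hu.integrable_sq_norm_sub hK hμK hr (hr.trans_le hrR))
    (hprod.integral_prod_right.const_mul _) ?_
  filter_upwards [hμK] with x hx
  rw [← intervalIntegral.integral_of_le hrR]
  refine sq_norm_sub_le_rpow_mul_integral_sq_norm_deriv hβ hr hrR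
    (fun s hs => hu.hasDerivAt s (hr.trans_le hs.1) x hx) ?_
  exact hu.continuousOn_deriv.comp (f := fun s => (s, x)) (by fun_prop)
    fun s hs => ⟨hr.trans_le hs.1, hx⟩

lemma integral_sq_norm_sub_le_setIntegral_Ioo [CompleteSpace F] (hK : IsCompact K)
    (hμK : ∀ᵐ x ∂μ, x ∈ K) (hu : IsC1CurveFamily u u' K) {β r R : ℝ} (hβ : 0 < β)
    (henergy : IntegrableAtFilter
      (fun s => s ^ (1 - 2 * β) * ∫ x, ‖u' s x‖ ^ 2 ∂μ) (𝓝[>] 0))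
    (hr : 0 < r) (hrR : r ≤ R) :
    ∫ x, ‖u R x - u r x‖ ^ 2 ∂μ ≤
      R ^ (2 * β) / (2 * β) * ∫ s in Ioo 0 R, s ^ (1 - 2 * β) * ∫ x, ‖u' s x‖ ^ 2 ∂μ := by
  have hR : 0 < R := hr.trans_le hrR
  have hnonneg : ∀ s ∈ Ioo 0 R, 0 ≤ s ^ (1 - 2 * β) * ∫ x, ‖u' s x‖ ^ 2 ∂μ := fun s hs =>
    mul_nonneg (Real.rpow_nonneg hs.1.le _) (integral_nonneg fun x => sq_nonneg _)
  refine (hu.integral_sq_norm_sub_le hK hμK hβ hr hrR).trans ?_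
  rw [integral_Ioc_eq_integral_Ioo]
  exact mul_le_mul_of_nonneg_left
    (setIntegral_mono_set (hu.integrableOn_energy_Ioo hK hμK henergy R)
      (ae_restrict_of_forall_mem measurableSet_Ioo hnonneg)
      (Ioo_subset_Ioo_left hr.le).eventuallyLE)
    (by positivity)

lemma integral_sq_norm_le_add (hK : IsCompact K) (hμK : ∀ᵐ x ∂μ, x ∈ K)
    (hu : IsC1CurveFamily u u' K) {r R η : ℝ} (hr : 0 < r) (hR : 0 < R) (hη : 0 < η) :
    ∫ x, ‖u R x‖ ^ 2 ∂μ ≤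
      (1 + η) * ∫ x, ‖u R x - u r x‖ ^ 2 ∂μ + (1 + η⁻¹) * ∫ x, ‖u r x‖ ^ 2 ∂μ := by
  have hdiff := hu.integrable_sq_norm_sub hK hμK hr hR
  have hstart := hu.integrable_sq_norm_slice hK hμK hr
  rw [← integral_const_mul, ← integral_const_mul,
    ← integral_add (hdiff.const_mul _) (hstart.const_mul _)]
  exact integral_mono (hu.integrable_sq_norm_slice hK hμK hR)
    ((hdiff.const_mul _).add (hstart.const_mul _))
    fun x => sq_norm_le_add_of_sq_norm_sub hη (u R x) (u r x)

lemma integral_sq_norm_le_of_frequently_lt [CompleteSpace F] (hK : IsCompact K)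
    (hμK : ∀ᵐ x ∂μ, x ∈ K) (hu : IsC1CurveFamily u u' K) {β : ℝ} (hβ : 0 < β)
    (hsmall : ∀ ε > 0, ∃ᶠ r in 𝓝[>] 0, ∫ x, ‖u r x‖ ^ 2 ∂μ < ε)
    (henergy : IntegrableAtFilter
      (fun s => s ^ (1 - 2 * β) * ∫ x, ‖u' s x‖ ^ 2 ∂μ) (𝓝[>] 0))
    {R : ℝ} (hR : 0 < R) :
    ∫ x, ‖u R x‖ ^ 2 ∂μ ≤
      R ^ (2 * β) / (2 * β) * ∫ s in Ioo 0 R, s ^ (1 - 2 * β) * ∫ x, ‖u' s x‖ ^ 2 ∂μ := by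
  set M := R ^ (2 * β) / (2 * β) * ∫ s in Ioo 0 R, s ^ (1 - 2 * β) * ∫ x, ‖u' s x‖ ^ 2 ∂μ
  -- Young's factor `1 + η⁻¹` is harmless: the mass at `r` can be made smaller than `η ^ 2`.
  have hbound : ∀ η > 0, ∫ x, ‖u R x‖ ^ 2 ∂μ ≤ (1 + η) * M + (1 + η⁻¹) * η ^ 2 := by
    intro η hη
    obtain ⟨r, hlt, hr⟩ :=
      ((hsmall (η ^ 2) (by positivity)).and_eventually (Ioo_mem_nhdsGT hR)).exists
    refine (hu.integral_sq_norm_le_add hK hμK hr.1 hR hη).trans ?_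
    gcongr
    exact hu.integral_sq_norm_sub_le_setIntegral_Ioo hK hμK hβ henergy hr.1 hr.2.le
  have hlim : Tendsto (fun η : ℝ => (1 + η) * M + (η ^ 2 + η)) (𝓝[>] 0) (𝓝 M) :=
    (Continuous.tendsto' (by fun_prop) 0 M (by simp)).mono_left nhdsWithin_le_nhds
  refine ge_of_tendsto hlim ?_
  filter_upwards [self_mem_nhdsWithin] with η hη
  refine (hbound η hη).trans_eq ?_
  have hη0 : η ≠ 0 := ne_of_gt hη
  field_simp

end IsC1CurveFamily

end CurveFamily

section TwistedDerivative

open Set Topology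

lemma sq_norm_twistDeriv {α R : ℝ} (hR : 0 < R) {f : ℝ → ℂ} {u' : ℂ}
    (hu' : HasDerivAt (fun r => r ^ α • f r) u' R) :
    ‖twistDeriv α f R‖ ^ 2 = R ^ (-(2 * α)) * ‖u'‖ ^ 2 := by
  have hderiv : deriv (fun r : ℝ => ((r ^ α : ℝ) : ℂ) * f r) R = u' := by
    simpa only [Complex.real_smul] using hu'.deriv
  rw [twistDeriv, hderiv, norm_mul, mul_pow, Complex.norm_real, Real.norm_of_nonneg
    (Real.rpow_nonneg hR.le _), ← Real.rpow_mul_natCast hR.le]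
  ring_nf

variable {X : Type*} [MeasurableSpace X] {μ : Measure X}

lemma integral_sq_norm_rpow_smul {F : Type*} [NormedAddCommGroup F] [NormedSpace ℝ F] {R : ℝ}
    (hR : 0 ≤ R) (α : ℝ) (g : X → F) :
    ∫ x, ‖R ^ α • g x‖ ^ 2 ∂μ = (R ^ α) ^ 2 * ∫ x, ‖g x‖ ^ 2 ∂μ := by
  simp only [norm_smul, mul_pow, Real.norm_of_nonneg (Real.rpow_nonneg hR α), integral_const_mul]

lemma rpow_mul_integral_sq_norm_twistDeriv {α p R : ℝ} (hR : 0 < R) {f : ℝ → X → ℂ} {u' : X → ℂ}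
    (hu' : ∀ᵐ x ∂μ, HasDerivAt (fun r => r ^ α • f r x) (u' x) R) :
    R ^ (1 - 2 * p) * ∫ x, ‖twistDeriv α (fun s => f s x) R‖ ^ 2 ∂μ =
      R ^ (1 - 2 * (p + α)) * ∫ x, ‖u' x‖ ^ 2 ∂μ := by
  have hint : ∫ x, ‖twistDeriv α (fun s => f s x) R‖ ^ 2 ∂μ =
      R ^ (-(2 * α)) * ∫ x, ‖u' x‖ ^ 2 ∂μ := by
    rw [← integral_const_mul]
    exact integral_congr_ae (hu'.mono fun x hx => sq_norm_twistDeriv hR hx)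
  rw [hint, ← mul_assoc, ← Real.rpow_add hR]
  ring_nf

lemma frequently_sq_rpow_mul_lt {α : ℝ} (hα : 1 ≤ α) {g : ℝ → ℝ}
    (hg : IntegrableAtFilter (fun R => R * g R) (𝓝[>] 0)) {ε : ℝ} (hε : 0 < ε) :
    ∃ᶠ R in 𝓝[>] 0, (R ^ α) ^ 2 * g R < ε := by
  refine frequently_lt_of_integrableAtFilter_rpow_mul (c := 1 - 2 * α) (by linarith)
    ((integrableAtFilter_nhdsGT_congr_of_eqOn fun R hR => ?_).1 hg) hε
  have hR0 : 0 < R := hR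
  have hpow : R ^ (1 - 2 * α) * (R ^ α) ^ 2 = R := by
    rw [← Real.rpow_mul_natCast hR0.le, ← Real.rpow_add hR0, Nat.cast_ofNat, mul_comm α 2,
      sub_add_cancel, Real.rpow_one]
  rw [← mul_assoc, hpow]

variable [TopologicalSpace X] [T2Space X] [OpensMeasurableSpace X] [IsFiniteMeasure μ] {K : Set X}

lemma sq_rpow_neg_mul_integral_sq_norm_le (hK : IsCompact K) (hμK : ∀ᵐ x ∂μ, x ∈ K) {α p : ℝ}
    (hpα : 0 < p + α) {f f' : ℝ → X → ℂ} (hf : IsC1CurveFamily f f' K)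
    (hsmall : ∀ ε > 0, ∃ᶠ R in 𝓝[>] 0, (R ^ α) ^ 2 * ∫ x, ‖f R x‖ ^ 2 ∂μ < ε)
    (henergy : IntegrableAtFilter (fun R => R ^ (1 - 2 * p) *
      ∫ x, ‖twistDeriv α (fun s => f s x) R‖ ^ 2 ∂μ) (𝓝[>] 0)) {R : ℝ} (hR : 0 < R) :
    (R ^ (-p)) ^ 2 * ∫ x, ‖f R x‖ ^ 2 ∂μ ≤
      (2 * (p + α))⁻¹ * ∫ R' in Ioo 0 R, R' ^ (1 - 2 * p) *
        ∫ x, ‖twistDeriv α (fun s => f s x) R'‖ ^ 2 ∂μ := by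
  set u' : ℝ → X → ℂ := fun s x => s ^ α • f' s x + (α * s ^ (α - 1)) • f s x
  have hu : IsC1CurveFamily (fun s x => s ^ α • f s x) u' K := hf.rpow_smul α
  have htwist : EqOn (fun s => s ^ (1 - 2 * p) * ∫ x, ‖twistDeriv α (fun s => f s x) s‖ ^ 2 ∂μ)
      (fun s => s ^ (1 - 2 * (p + α)) * ∫ x, ‖u' s x‖ ^ 2 ∂μ) (Ioi 0) := fun s hs =>
    rpow_mul_integral_sq_norm_twistDeriv hs (hμK.mono fun x hx => hu.hasDerivAt s hs x hx)
  have hu_small : ∀ ε > 0, ∃ᶠ r in 𝓝[>] 0, ∫ x, ‖r ^ α • f r x‖ ^ 2 ∂μ < ε := fun ε hε =>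
    ((hsmall ε hε).and_eventually self_mem_nhdsWithin).mono fun r hr => by
      rw [integral_sq_norm_rpow_smul (le_of_lt hr.2)]
      exact hr.1
  have hpow : (R ^ (-p)) ^ 2 = R ^ (-(2 * (p + α))) * (R ^ α) ^ 2 := by
    rw [← Real.rpow_mul_natCast hR.le, ← Real.rpow_mul_natCast hR.le, ← Real.rpow_add hR]
    ring_nf
  have hcancel : R ^ (-(2 * (p + α))) * R ^ (2 * (p + α)) = 1 := by
    rw [← Real.rpow_add hR, neg_add_cancel, Real.rpow_zero]
  have hle := hu.integral_sq_norm_le_of_frequently_lt hK hμK hpα hu_small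
    ((integrableAtFilter_nhdsGT_congr_of_eqOn htwist).1 henergy) hR
  rw [setIntegral_congr_fun measurableSet_Ioo (htwist.mono Ioo_subset_Ioi_self), hpow, mul_assoc,
    ← integral_sq_norm_rpow_smul hR.le]
  refine (mul_le_mul_of_nonneg_left hle (Real.rpow_nonneg hR.le _)).trans_eq ?_
  rw [← mul_assoc, ← mul_div_assoc, hcancel, one_div]

theorem vanishing_at_origin_general (hK : IsCompact K) (hμK : ∀ᵐ x ∂μ, x ∈ K) {α p : ℝ}
    (hα : 1 ≤ α) (hpα : 0 < p + α) {f f' : ℝ → X → ℂ} (hf : IsC1CurveFamily f f' K)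
    (h1 : IntegrableAtFilter (fun R => R * ∫ x, ‖f R x‖ ^ 2 ∂μ) (𝓝[>] 0))
    (h2 : IntegrableAtFilter (fun R => R ^ (1 - 2 * p) *
      ∫ x, ‖twistDeriv α (fun s => f s x) R‖ ^ 2 ∂μ) (𝓝[>] 0)) :
    (∀ ε > 0, ∀ δ > 0, ∃ R, 0 < R ∧ R < δ ∧ (R ^ α) ^ 2 * ∫ x, ‖f R x‖ ^ 2 ∂μ < ε) ∧
    (∀ R, 0 < R → (R ^ (-p)) ^ 2 * ∫ x, ‖f R x‖ ^ 2 ∂μ ≤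
      (2 * (p + α))⁻¹ * ∫ R' in Ioo 0 R, R' ^ (1 - 2 * p) *
        ∫ x, ‖twistDeriv α (fun s => f s x) R'‖ ^ 2 ∂μ) ∧
    Tendsto (fun R => (R ^ (-p)) ^ 2 * ∫ x, ‖f R x‖ ^ 2 ∂μ) (𝓝[>] 0) (𝓝 0) := by
  have hsmall : ∀ ε > 0, ∃ᶠ R in 𝓝[>] 0, (R ^ α) ^ 2 * ∫ x, ‖f R x‖ ^ 2 ∂μ < ε :=
    fun ε hε => frequently_sq_rpow_mul_lt hα h1 hε
  have hbound := fun R (hR : 0 < R) =>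
    sq_rpow_neg_mul_integral_sq_norm_le hK hμK hpα hf hsmall h2 hR
  have htail := (tendsto_setIntegral_Ioo_nhdsGT_zero h2).const_mul (2 * (p + α))⁻¹
  rw [mul_zero] at htail
  refine ⟨fun ε hε δ hδ => ?_, hbound, squeeze_zero' ?_ ?_ htail⟩
  · obtain ⟨R, hlt, hR⟩ := ((hsmall ε hε).and_eventually (Ioo_mem_nhdsGT hδ)).exists
    exact ⟨R, hR.1, hR.2, hlt⟩
  · exact .of_forall fun R => mul_nonneg (sq_nonneg _) (integral_nonneg fun x => sq_nonneg _)
  · filter_upwards [self_mem_nhdsWithin] with R hR using hbound R hR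

end TwistedDerivative

/-- Let `α ≥ 1`, `p + α > 0`, and `f` smooth on `(0,∞) × 𝕊²` with finite weighted
energies. Then the spherical `L²` norm of `R^α f` has liminf `0` at `R = 0`, and
`∫_{𝕊²}|R^{-p}f|² dσ ≤ 2(p+α)⁻¹ ∫₀^R ∫_{𝕊²} R'^{1-2p}|∂_R^α f|² dσ dR'`;
in particular `∫_{𝕊²}|R^{-p}f|² dσ → 0` as `R → 0`. -/
theorem vanishing_at_origin (α p : ℝ) (hα : 1 ≤ α) (hpα : 0 < p + α)
    (f : ℝ → E3 → ℂ)
    (hf : ContDiffOn ℝ (⊤ : ℕ∞) (fun q : ℝ × E3 => f q.1 q.2) {q : ℝ × E3 | 0 < q.1})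
    (h1 : IntegrableOn
      (fun R => R * ∫ x in Metric.sphere (0 : E3) 1, ‖f R x‖ ^ 2 ∂(μH[2]))
      (Set.Ioi 0))
    (h2 : IntegrableOn
      (fun R => R ^ (1 - 2 * p) *
        ∫ x in Metric.sphere (0 : E3) 1, ‖twistDeriv α (fun s => f s x) R‖ ^ 2 ∂(μH[2]))
      (Set.Ioi 0)) :
    (∀ ε > (0 : ℝ), ∀ δ > (0 : ℝ), ∃ R : ℝ, 0 < R ∧ R < δ ∧
      ((R ^ α : ℝ)) ^ 2 * ∫ x in Metric.sphere (0 : E3) 1, ‖f R x‖ ^ 2 ∂(μH[2]) < ε) ∧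
    (∀ R : ℝ, 0 < R →
      ((R ^ (-p) : ℝ)) ^ 2 * (∫ x in Metric.sphere (0 : E3) 1, ‖f R x‖ ^ 2 ∂(μH[2])) ≤
        2 * (p + α)⁻¹ *
          ∫ R' in Set.Ioo (0 : ℝ) R,
            R' ^ (1 - 2 * p) *
              ∫ x in Metric.sphere (0 : E3) 1,
                ‖twistDeriv α (fun s => f s x) R'‖ ^ 2 ∂(μH[2])) ∧
    Tendsto
      (fun R : ℝ =>
        ((R ^ (-p) : ℝ)) ^ 2 * ∫ x in Metric.sphere (0 : E3) 1, ‖f R x‖ ^ 2 ∂(μH[2]))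
      (nhdsWithin 0 (Set.Ioi 0)) (nhds 0) := by
  have : IsFiniteMeasure ((μH[2] : Measure E3).restrict (Metric.sphere 0 1)) :=
    isFiniteMeasure_restrict.2 (mod_cast
      (hausdorffMeasure_unitSphere_lt_top (E := E3) finrank_euclideanSpace_fin).ne)
  obtain ⟨hliminf, hbound, hlim⟩ := vanishing_at_origin_general (isCompact_sphere (0 : E3) 1)
    (ae_restrict_mem Metric.isClosed_sphere.measurableSet) hα hpα
    (isC1CurveFamily_of_contDiffOn (hf.of_le (mod_cast le_top)) _)
    ⟨_, self_mem_nhdsWithin, h1⟩ ⟨_, self_mem_nhdsWithin, h2⟩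
  refine ⟨hliminf, fun R hR => (hbound R hR).trans ?_, hlim⟩
  have hconst : (2 * (p + α))⁻¹ ≤ 2 * (p + α)⁻¹ := by
    rw [mul_inv]
    gcongr
    norm_num
  exact mul_le_mul_of_nonneg_right hconst (setIntegral_nonneg measurableSet_Ioo fun s hs =>
    mul_nonneg (Real.rpow_nonneg hs.1.le _) (integral_nonneg fun _ => sq_nonneg _))

end
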